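/- arXiv:2409.17724 — 3 statements merged into one kernel-verified Lean document; each statement's English description precedes it below -/
import Mathlib

section
/- Every graph G of order n with fewer than 2n-3 edges has an independent cut, i.e., there is an independent set S of vertices of G and two vertices of G outside of S that lie in different connected components of G-S. -/
/-- `S` is a vertex cut of `G`: some two vertices outside of `S` lie in
different connected components of `G - S`. -/
def IsVertexCut {V : Type*} (G : SimpleGraph V) (S : Set V) : Prop :=
  ∃ a b : ↥(Sᶜ), ¬ (G.induce Sᶜ).Reachable a b

/-- An independent cut is a vertex cut that is an independent set. -/
def IsIndependentCut {V : Type*} (G : SimpleGraph V) (S : Set V) : Prop :=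
  IsVertexCut G S ∧ ∀ a ∈ S, ∀ b ∈ S, ¬ G.Adj a b

/-!
The induction proves more: for every vertex `x` the cut can be chosen to avoid `x` or to lie in
`{x}`. If the neighbourhood of `x` is independent, it is a cut, or else `x` is adjacent to all other
vertices and `{x}` is a cut, since `G` has too few edges to be complete. Otherwise `x` lies in a
triangle `x u v`. Contracting the edge `x u` loses one vertex and at least two edges, so the
contracted graph has a cut of the required kind. If it avoids the contracted vertex, it is also a
cut of `G`. If not, it is that vertex alone, so `{x, u}` is a cut of `G`; by counting, one of its
two sides together with `x` and `u` is again sparse, and since `x u` is an edge, a cut of that side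
is a cut of `G`.
-/

open Set

section IndependentCut

variable {V W : Type*} {G : SimpleGraph V} {A B S : Set V}

/-- `(A, B)` is a separation of `G` in the sense of Diestel: `A` and `B` cover the vertices and no
edge joins `A \ B` to `B \ A`. A vertex cut is the overlap `A ∩ B` of a separation with both sides
proper; unlike `IsVertexCut`, this notion involves no walks. -/
structure IsSeparation (G : SimpleGraph V) (A B : Set V) : Prop where
  union_eq_univ : A ∪ B = univ
  not_adj : ∀ ⦃a b⦄, a ∉ B → b ∉ A → ¬ G.Adj a b

namespace IsSeparation

theorem mem_or_mem (h : IsSeparation G A B) (v : V) : v ∈ A ∨ v ∈ B :=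
  (h.union_eq_univ ▸ mem_univ v : v ∈ A ∪ B)

theorem symm (h : IsSeparation G A B) : IsSeparation G B A where
  union_eq_univ := union_comm B A ▸ h.union_eq_univ
  not_adj _ _ ha hb hab := h.not_adj hb ha hab.symm

theorem preimage {f : V → W} {A B : Set W} (h : IsSeparation (G.map f) A B) :
    IsSeparation G (f ⁻¹' A) (f ⁻¹' B) where
  union_eq_univ := by rw [← preimage_union, h.union_eq_univ, preimage_univ]
  not_adj a b ha hb hab := by
    have hne : f a ≠ f b := fun hfab ↦
      (h.mem_or_mem (f a)).elim (fun hA ↦ hb (hfab ▸ hA : f b ∈ A)) ha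
    exact h.not_adj ha hb (SimpleGraph.map_adj_apply' hab hne)

theorem subset_or_subset_of_isClique (h : IsSeparation G A B) {K : Set V} (hK : G.IsClique K) :
    K ⊆ A ∨ K ⊆ B := by
  by_contra! hAB
  obtain ⟨b, hbK, hbA⟩ := not_subset.mp hAB.1
  obtain ⟨a, haK, haB⟩ := not_subset.mp hAB.2
  have hne : a ≠ b := by
    rintro rfl
    exact (h.mem_or_mem a).elim hbA haB
  exact h.not_adj haB hbA (hK haK hbK hne)

theorem union_compl_of_induce (h : IsSeparation G A B) {C D : Set A}
    (hCD : IsSeparation (G.induce A) C D) (hC : ∀ v : A, v.1 ∈ B → v ∈ C) :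
    IsSeparation G ((↑) '' C ∪ Aᶜ) ((↑) '' D) where
  union_eq_univ := by
    refine eq_univ_of_forall fun v ↦ ?_
    by_cases hv : v ∈ A
    · rcases hCD.mem_or_mem ⟨v, hv⟩ with hvC | hvD
      · exact .inl (.inl ⟨_, hvC, rfl⟩)
      · exact .inr ⟨_, hvD, rfl⟩
    · exact .inl (.inr hv)
  not_adj a b ha hb hab := by
    have hbA : b ∈ A := by_contra fun hbA ↦ hb (.inr hbA)
    have hbC : ⟨b, hbA⟩ ∉ C := fun hbC ↦ hb (.inl ⟨_, hbC, rfl⟩)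
    by_cases haA : a ∈ A
    · exact hCD.not_adj (a := ⟨a, haA⟩) (b := ⟨b, hbA⟩) (fun haD ↦ ha ⟨_, haD, rfl⟩) hbC hab
    · exact h.not_adj (fun hbB ↦ hbC (hC ⟨b, hbA⟩ hbB)) haA hab.symm

end IsSeparation

theorem IsVertexCut.exists_isSeparation (hS : IsVertexCut G S) :
    ∃ A B, IsSeparation G A B ∧ Aᶜ.Nonempty ∧ Bᶜ.Nonempty ∧ A ∩ B = S := by
  obtain ⟨a, b, hab⟩ := hS
  refine ⟨{v | ∀ hv : v ∈ Sᶜ, (G.induce Sᶜ).Reachable a ⟨v, hv⟩},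
    {v | ∀ hv : v ∈ Sᶜ, ¬ (G.induce Sᶜ).Reachable a ⟨v, hv⟩}, ⟨?_, ?_⟩,
    ⟨b, fun hb ↦ hab (hb b.2)⟩, ⟨a, fun ha ↦ ha a.2 .rfl⟩, ?_⟩
  · refine eq_univ_of_forall fun v ↦ ?_
    by_cases hv : ∃ hv : v ∈ Sᶜ, (G.induce Sᶜ).Reachable a ⟨v, hv⟩
    · exact .inl fun _ ↦ hv.2
    · exact .inr (not_exists.mp hv)
  · intro c d hc hd hcd
    simp only [mem_ofPred_eq, not_forall, not_not] at hc hd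
    obtain ⟨hcS, hac⟩ := hc
    obtain ⟨hdS, had⟩ := hd
    have hcd' : (G.induce Sᶜ).Adj ⟨c, hcS⟩ ⟨d, hdS⟩ := hcd
    exact had (hac.trans hcd'.reachable)
  · ext v
    refine ⟨fun ⟨hv, hv'⟩ ↦ by_contra fun hvS ↦ hv' hvS (hv hvS), fun hv ↦ ?_⟩
    exact ⟨fun hvS ↦ absurd hv hvS, fun hvS ↦ absurd hv hvS⟩

theorem IsSeparation.isVertexCut (h : IsSeparation G A B) (hA : Aᶜ.Nonempty)
    (hB : Bᶜ.Nonempty) : IsVertexCut G (A ∩ B) := by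
  obtain ⟨b, hb⟩ := hA
  obtain ⟨a, ha⟩ := hB
  refine ⟨⟨a, fun haS ↦ ha haS.2⟩, ⟨b, fun hbS ↦ hb hbS.1⟩, fun hab ↦ ?_⟩
  have hreach : ∀ c, (G.induce (A ∩ B)ᶜ).Reachable ⟨a, fun haS ↦ ha haS.2⟩ c → c.1 ∉ B := by
    intro c hc
    rw [SimpleGraph.reachable_iff_reflTransGen] at hc
    induction hc with
    | refl => exact ha
    | @tail c d _ hcd hcB =>
      have hdA : d.1 ∈ A := by_contra fun hdA ↦ h.not_adj hcB hdA hcd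
      exact fun hdB ↦ d.2 ⟨hdA, hdB⟩
  exact (h.mem_or_mem b).elim hb (hreach _ hab)

theorem IsVertexCut.preimage {f : V → W} {S : Set W} (hS : IsVertexCut (G.map f) S)
    (hf : f.Surjective) : IsVertexCut G (f ⁻¹' S) := by
  obtain ⟨A, B, h, hA, hB, rfl⟩ := hS.exists_isSeparation
  exact h.preimage.isVertexCut (hA.preimage hf) (hB.preimage hf)

theorem IsVertexCut.image_val (h : IsSeparation G A B) (hK : G.IsClique (A ∩ B)) {S : Set A}
    (hS : IsVertexCut (G.induce A) S) : IsVertexCut G ((↑) '' S) := by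
  obtain ⟨C, D, hCD, hC, hD, rfl⟩ := hS.exists_isSeparation
  -- The clique `A ∩ B` lies on one side of `(C, D)`; the rest of `B` is added to that side.
  wlog hKC : ∀ v : A, v.1 ∈ B → v ∈ C generalizing C D
  · have hK' : (G.induce A).IsClique {v : A | v.1 ∈ B} := fun v hv w hw hvw ↦
      hK ⟨v.2, hv⟩ ⟨w.2, hw⟩ (Subtype.coe_injective.ne hvw)
    have hKD := (hCD.subset_or_subset_of_isClique hK').resolve_left hKC
    exact inter_comm D C ▸ this D C hCD.symm hD hC (inter_comm D C ▸ hS) hKD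
  have hdisj : Aᶜ ∩ (↑) '' D = (∅ : Set V) :=
    (disjoint_compl_left_iff_subset.mpr (Subtype.coe_image_subset A D)).inter_eq
  have hinter : ((↑) '' C ∪ Aᶜ) ∩ (↑) '' D = ((↑) '' (C ∩ D) : Set V) := by
    rw [union_inter_distrib_right, hdisj, union_empty, image_inter Subtype.coe_injective]
  obtain ⟨c, hc⟩ := hC
  obtain ⟨d, hd⟩ := hD
  rw [← hinter]
  exact (h.union_compl_of_induce hCD hKC).isVertexCut ⟨c, by simpa using hc⟩ ⟨d, by simpa using hd⟩

theorem isVertexCut_neighborSet {a b : V} (hab : ¬ G.Adj a b) (hne : b ≠ a) :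
    IsVertexCut G (G.neighborSet a) := by
  have h : IsSeparation G (insert a (G.neighborSet a)) {a}ᶜ := by
    refine ⟨by rw [insert_eq, union_right_comm, union_compl_self, univ_union], ?_⟩
    intro c d hc hd hcd
    obtain rfl : c = a := by simpa using hc
    exact hd (.inr hcd)
  have hinter : insert a (G.neighborSet a) ∩ {a}ᶜ = G.neighborSet a := by
    rw [← sdiff_eq, insert_sdiff_self_of_notMem G.notMem_neighborSet_self]
  exact hinter ▸ h.isVertexCut ⟨b, by simp [hne, hab]⟩ ⟨a, by simp⟩

theorem isIndependentCut_iff : IsIndependentCut G S ↔ IsVertexCut G S ∧ G.IsIndepSet S := by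
  refine and_congr_right fun _ ↦ ⟨fun h a ha b hb _ ↦ h a ha b hb, fun h a ha b hb hab ↦ ?_⟩
  exact h ha hb hab.ne hab

theorem IsIndependentCut.preimage {f : V → W} {S : Set W} (hS : IsIndependentCut (G.map f) S)
    (hf : f.Surjective) (hfS : ∀ ⦃a b⦄, G.Adj a b → f a = f b → f a ∉ S) :
    IsIndependentCut G (f ⁻¹' S) := by
  refine ⟨hS.1.preimage hf, fun a ha b hb hab ↦ ?_⟩
  have hne : f a ≠ f b := fun hfab ↦ hfS hab hfab ha
  exact hS.2 _ ha _ hb (SimpleGraph.map_adj_apply' hab hne)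

theorem IsIndependentCut.image_val (h : IsSeparation G A B) (hK : G.IsClique (A ∩ B)) {S : Set A}
    (hS : IsIndependentCut (G.induce A) S) : IsIndependentCut G ((↑) '' S) := by
  refine ⟨hS.1.image_val h hK, ?_⟩
  rintro _ ⟨a, ha, rfl⟩ _ ⟨b, hb, rfl⟩
  exact hS.2 a ha b hb

theorem exists_isIndependentCut_of_isIndepSet_neighborSet {x : V}
    (hx : G.IsIndepSet (G.neighborSet x)) (hG : G ≠ ⊤) :
    ∃ S, IsIndependentCut G S ∧ (x ∉ S ∨ S ⊆ {x}) := by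
  by_cases hdom : ∃ b, b ≠ x ∧ ¬ G.Adj x b
  · obtain ⟨b, hbx, hb⟩ := hdom
    exact ⟨G.neighborSet x, isIndependentCut_iff.mpr ⟨isVertexCut_neighborSet hb hbx, hx⟩,
      .inl G.notMem_neighborSet_self⟩
  · push Not at hdom
    obtain ⟨a, b, hab, hnadj⟩ := SimpleGraph.ne_top_iff_exists_not_adj.mp hG
    have hax : a ≠ x := by
      rintro rfl
      exact hnadj (hdom b hab.symm)
    have hNa : G.neighborSet a = {x} := by
      refine Subset.antisymm (fun c hc ↦ by_contra fun hcx ↦ ?_)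
        (singleton_subset_iff.mpr (hdom a hax).symm)
      exact hx (hdom a hax) (hdom c hcx) hc.ne hc
    have hcut : IsVertexCut G {x} := hNa ▸ isVertexCut_neighborSet hnadj hab.symm
    exact ⟨{x}, isIndependentCut_iff.mpr ⟨hcut, pairwise_singleton _ _⟩, .inr Subset.rfl⟩

theorem ncard_edgeSet_le_choose_two [Finite V] (G : SimpleGraph V) :
    G.edgeSet.ncard ≤ (Nat.card V).choose 2 := by
  classical
  have := Fintype.ofFinite V
  rw [← SimpleGraph.coe_edgeFinset, ncard_coe_finset, Nat.card_eq_fintype_card]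
  exact SimpleGraph.card_edgeFinset_le_card_choose_two

theorem ncard_edgeSet_top [Finite V] :
    (⊤ : SimpleGraph V).edgeSet.ncard = (Nat.card V).choose 2 := by
  classical
  have := Fintype.ofFinite V
  rw [← SimpleGraph.coe_edgeFinset, ncard_coe_finset, Nat.card_eq_fintype_card,
    SimpleGraph.card_edgeFinset_top_eq_card_choose_two]

theorem ne_top_of_ncard_edgeSet_add_four_le [Finite V]
    (h : G.edgeSet.ncard + 4 ≤ 2 * Nat.card V) : G ≠ ⊤ := by
  rintro rfl
  rw [ncard_edgeSet_top] at h
  have hchoose (n : ℕ) : 2 * n ≤ n.choose 2 + 3 := by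
    rcases n with _ | _ | k
    · simp
    · simp
    · simp only [Nat.choose_succ_succ', zero_add, Nat.choose_zero_right,
        Nat.choose_one_right]
      lia
  exact absurd (hchoose (Nat.card V)) (by lia)

theorem ncard_edgeSet_induce (G : SimpleGraph V) (A : Set V) :
    (G.induce A).edgeSet.ncard = (G.edgeSet ∩ A.sym2).ncard := by
  rw [← ncard_image_of_injective _ (Sym2.map.injective Subtype.val_injective)]
  congr 1
  ext e
  constructor
  · rintro ⟨⟨a, b⟩, hab, rfl⟩
    exact ⟨hab, a.2, b.2⟩
  · induction e with | _ a b
    rintro ⟨hab, ha, hb⟩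
    exact ⟨s(⟨a, ha⟩, ⟨b, hb⟩), hab, rfl⟩

theorem ncard_edgeSet_induce_add_le (G : SimpleGraph V) [Finite G.edgeSet] (A B : Set V) :
    (G.induce A).edgeSet.ncard + (G.induce B).edgeSet.ncard ≤
      G.edgeSet.ncard + (G.induce (A ∩ B)).edgeSet.ncard := by
  have hinter : G.edgeSet ∩ A.sym2 ∩ (G.edgeSet ∩ B.sym2) = G.edgeSet ∩ (A ∩ B).sym2 := by
    rw [← inter_inter_distrib_left, sym2_inter]
  have hunion : (G.edgeSet ∩ A.sym2 ∪ G.edgeSet ∩ B.sym2).ncard ≤ G.edgeSet.ncard :=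
    ncard_le_ncard (union_subset inter_subset_left inter_subset_left)
  simp only [ncard_edgeSet_induce]
  rw [← ncard_union_add_ncard_inter (G.edgeSet ∩ A.sym2) (G.edgeSet ∩ B.sym2), hinter]
  gcongr

theorem ncard_edgeSet_map_add_two_le [Finite G.edgeSet] {f : V → W} {x u v : V}
    (hxu : G.Adj x u) (hxv : G.Adj x v) (huv : G.Adj u v) (hf : f x = f u) :
    (G.map f).edgeSet.ncard + 2 ≤ G.edgeSet.ncard := by
  have hlost : {s(x, u), s(u, v)} ⊆ G.edgeSet := by simp [insert_subset_iff, hxu, huv]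
  have hlost_card : ({s(x, u), s(u, v)} : Set (Sym2 V)).ncard = 2 :=
    ncard_pair (by simp [hxu.ne, hxv.ne])
  have hsub : (G.map f).edgeSet ⊆ Sym2.map f '' (G.edgeSet \ {s(x, u), s(u, v)}) := by
    intro e
    induction e with | _ c d
    rw [SimpleGraph.mem_edgeSet, SimpleGraph.map_adj']
    rintro ⟨hne, a, b, hab, rfl, rfl⟩
    have hnxu : s(a, b) ≠ s(x, u) := by
      rw [ne_eq, Sym2.eq_iff]
      grind
    by_cases huv' : s(a, b) = s(u, v)
    · refine ⟨s(x, v), ⟨hxv, by simp [huv.ne', hxu.ne, hxv.ne]⟩, ?_⟩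
      rw [← Sym2.map_mk, huv', Sym2.map_mk, Sym2.map_mk, hf]
    · exact ⟨s(a, b), ⟨hab, by simp [hnxu, huv']⟩, rfl⟩
  calc (G.map f).edgeSet.ncard + 2
      ≤ (G.edgeSet \ {s(x, u), s(u, v)}).ncard + 2 := by
        gcongr
        exact (ncard_le_ncard hsub).trans ncard_image_le
    _ = G.edgeSet.ncard := by rw [← hlost_card, ncard_sdiff_add_ncard_of_subset hlost]

theorem IsVertexCut.exists_isSeparation_ncard_edgeSet_induce_add_four_le [Finite V]
    (hG : G.edgeSet.ncard + 4 ≤ 2 * Nat.card V) {K : Set V} (hK : IsVertexCut G K)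
    (hK2 : K.ncard = 2) :
    ∃ A B, IsSeparation G A B ∧ A ∩ B = K ∧ Aᶜ.Nonempty ∧
      (G.induce A).edgeSet.ncard + 4 ≤ 2 * A.ncard := by
  obtain ⟨A, B, h, hA, hB, rfl⟩ := hK.exists_isSeparation
  have hedges := ncard_edgeSet_induce_add_le G A B
  have hvertices : A.ncard + B.ncard = Nat.card V + 2 := by
    rw [← ncard_union_add_ncard_inter, h.union_eq_univ, ncard_univ, hK2]
  have hoverlap : (G.induce (A ∩ B)).edgeSet.ncard ≤ 1 := by
    simpa [hK2] using ncard_edgeSet_le_choose_two (G.induce (A ∩ B))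
  by_cases hsparse : (G.induce A).edgeSet.ncard + 4 ≤ 2 * A.ncard
  · exact ⟨A, B, h, rfl, hA, hsparse⟩
  · exact ⟨B, A, h.symm, inter_comm B A, hB, by lia⟩

theorem exists_surjective_identifying_pair {x u : V} (hxu : x ≠ u) :
    ∃ f : V → ({u}ᶜ : Set V), f.Surjective ∧ ∀ a b, f a = f b ↔ a = b ∨ s(a, b) = s(x, u) := by
  classical
  refine ⟨fun v ↦ if hv : v = u then ⟨x, hxu⟩ else ⟨v, hv⟩, fun v ↦ ⟨v, dif_neg v.2⟩, ?_⟩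
  intro a b
  rw [Sym2.eq_iff]
  grind

theorem exists_isIndependentCut_or_isVertexCut_pair_of_map {f : V → W} {x u : V}
    (hf : f.Surjective) (hfib : ∀ a b, f a = f b ↔ a = b ∨ s(a, b) = s(x, u)) {T : Set W}
    (hT : IsIndependentCut (G.map f) T) (hxT : f x ∉ T ∨ T ⊆ {f x}) :
    (∃ S, IsIndependentCut G S ∧ x ∉ S) ∨ IsVertexCut G {x, u} := by
  by_cases hfx : f x ∈ T
  · have hpre : f ⁻¹' T = {x, u} := by
      obtain rfl : T = {f x} :=
        (hxT.resolve_left (not_not.mpr hfx)).antisymm (singleton_subset_iff.mpr hfx)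
      ext a
      simp only [mem_preimage, mem_singleton_iff, hfib, Sym2.eq_iff, mem_insert_iff]
      grind
    exact .inr (hpre ▸ hT.1.preimage hf)
  · refine .inl ⟨f ⁻¹' T, hT.preimage hf fun a b hab hfab ↦ ?_, hfx⟩
    have hpair : s(a, b) = s(x, u) := ((hfib a b).mp hfab).resolve_left hab.ne
    have hfa : f a = f x := by grind
    rwa [hfa]

theorem exists_isIndependentCut_notMem_or_subset_singleton [Finite V]
    (hG : G.edgeSet.ncard + 4 ≤ 2 * Nat.card V) (x : V) :
    ∃ S, IsIndependentCut G S ∧ (x ∉ S ∨ S ⊆ {x}) := by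
  induction hn : Nat.card V using Nat.strong_induction_on generalizing V with | _ n ih
  subst hn
  by_cases hx : G.IsIndepSet (G.neighborSet x)
  · exact exists_isIndependentCut_of_isIndepSet_neighborSet hx
      (ne_top_of_ncard_edgeSet_add_four_le hG)
  obtain ⟨u, hxu, v, hxv, huv⟩ : ∃ u, G.Adj x u ∧ ∃ v, G.Adj x v ∧ G.Adj u v := by
    simp only [Set.Pairwise, SimpleGraph.mem_neighborSet] at hx
    grind
  obtain ⟨f, hf, hfib⟩ := exists_surjective_identifying_pair hxu.ne
  have hedges : (G.map f).edgeSet.ncard + 2 ≤ G.edgeSet.ncard :=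
    ncard_edgeSet_map_add_two_le hxu hxv huv ((hfib x u).mpr (.inr rfl))
  have hvertices : 1 + Nat.card ({u}ᶜ : Set V) = Nat.card V := by
    rw [← ncard_singleton u, Nat.card_coe_set_eq, ncard_add_ncard_compl]
  obtain ⟨T, hT, hxT⟩ := ih _ (by lia) (G := G.map f) (by lia) (f x) rfl
  obtain ⟨S, hS, hxS⟩ | hcut := exists_isIndependentCut_or_isVertexCut_pair_of_map hf hfib hT hxT
  · exact ⟨S, hS, .inl hxS⟩
  obtain ⟨A, B, h, hAB, hA, hsparse⟩ :=
    hcut.exists_isSeparation_ncard_edgeSet_induce_add_four_le hG (ncard_pair hxu.ne)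
  have hclique : G.IsClique (A ∩ B) := hAB ▸ SimpleGraph.isClique_pair.mpr fun _ ↦ hxu
  have hxA : x ∈ A := (hAB ▸ mem_insert x {u} : x ∈ A ∩ B).1
  obtain ⟨S, hS, hxS⟩ := ih _ (ncard_lt_card (nonempty_compl.mp hA)) hsparse ⟨x, hxA⟩ rfl
  refine ⟨_, hS.image_val h hclique, hxS.imp (fun hxS ↦ by simpa [hxA] using hxS) fun hS ↦ ?_⟩
  exact (image_mono hS).trans image_singleton.subset

end IndependentCut

/-- Every graph of order `n` with fewer than `2n - 3` edges has an independent cut. -/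
theorem every_sparse_graph_has_independent_cut
    {V : Type*} [Fintype V] (G : SimpleGraph V) [Fintype G.edgeSet]
    (h : (G.edgeFinset.card : ℤ) < 2 * Fintype.card V - 3) :
    ∃ S : Set V, IsIndependentCut G S := by
  have hG : G.edgeSet.ncard + 4 ≤ 2 * Nat.card V := by
    rw [← SimpleGraph.coe_edgeFinset, ncard_coe_finset, Nat.card_eq_fintype_card]
    lia
  have : Nonempty V := (Nat.card_pos_iff.mp (by lia)).1
  obtain ⟨S, hS, -⟩ :=
    exists_isIndependentCut_notMem_or_subset_singleton hG (Classical.arbitrary V)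
  exact ⟨S, hS⟩
end

section
/- Let H be a graph and let G arise from H by adding one new vertex that is adjacent to all vertices of H. Then G has a forest cut if and only if H has an independent cut. -/
/-- A forest cut is a vertex cut whose induced subgraph is a forest. -/
def IsForestCut {V : Type*} (G : SimpleGraph V) (S : Set V) : Prop :=
  IsVertexCut G S ∧ (G.induce S).IsAcyclic

/-!
A vertex joined to all others belongs to every vertex cut, and deleting it from the graph and from
the cut changes neither what remains nor, hence, the cut property. Inside a set containing it, any
edge avoiding it closes a triangle through it; if there is no such edge, the induced graph is a
star. So the cut induces a forest exactly when it is independent apart from that vertex.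
-/

open SimpleGraph

section

variable {V W : Type*} {G : SimpleGraph V} {H : SimpleGraph W} {S : Set V} {v : V}

lemma isUniversal_induce (hv : G.IsUniversal v) (hvS : v ∈ S) :
    (G.induce S).IsUniversal ⟨v, hvS⟩ :=
  fun _ hw ↦ hv fun h ↦ hw (Subtype.ext h)

lemma isIndepSet_iff_forall_not_adj : G.IsIndepSet S ↔ ∀ a ∈ S, ∀ b ∈ S, ¬ G.Adj a b :=
  ⟨fun h _ ha _ hb hab ↦ h ha hb hab.ne hab, fun h a ha b hb _ ↦ h a ha b hb⟩

lemma isIndepSet_preimage_iff (f : H ↪g G) :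
    H.IsIndepSet (f ⁻¹' S) ↔ G.IsIndepSet (S ∩ Set.range f) := by
  rw [← Set.image_preimage_eq_inter_range, IsIndepSet, IsIndepSet,
    f.injective.injOn.pairwise_image]
  simp only [Set.Pairwise, Function.onFun, f.map_adj_iff]

lemma isAcyclic_of_isIndepSet_compl_singleton (h : G.IsIndepSet {v}ᶜ) : G.IsAcyclic := by
  have le_star : G ≤ starGraph v := fun a b hab ↦ by
    rw [starGraph_adj]
    refine ⟨hab.ne, ?_⟩
    by_contra! hne
    exact h hne.1 hne.2 hab.ne hab
  exact (isAcyclic_starGraph v).anti le_star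

lemma isAcyclic_iff_isIndepSet_compl_singleton (hv : G.IsUniversal v) :
    G.IsAcyclic ↔ G.IsIndepSet {v}ᶜ := by
  refine ⟨fun hG ↦ ?_, isAcyclic_of_isIndepSet_compl_singleton⟩
  have triangleFree : G.CliqueFree 3 := hG.cliqueFree le_rfl
  rw [← hv.neighborSet_eq]
  exact isIndepSet_neighborSet_of_triangleFree G triangleFree v

lemma isAcyclic_induce_iff_isIndepSet_sdiff_singleton (hv : G.IsUniversal v) (hvS : v ∈ S) :
    (G.induce S).IsAcyclic ↔ G.IsIndepSet (S \ {v}) := by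
  have preimage_sdiff : (Embedding.induce S : G.induce S ↪g G) ⁻¹' (S \ {v}) = {⟨v, hvS⟩}ᶜ := by
    ext ⟨w, hw⟩
    simp [hw]
  have range_induce : Set.range (Embedding.induce S : G.induce S ↪g G) = S := Subtype.range_coe
  rw [isAcyclic_iff_isIndepSet_compl_singleton (isUniversal_induce hv hvS), ← preimage_sdiff,
    isIndepSet_preimage_iff, range_induce, Set.inter_eq_left.mpr Set.sdiff_subset]

lemma IsVertexCut.mem_of_isUniversal (hS : IsVertexCut G S) (hv : G.IsUniversal v) : v ∈ S := by
  by_contra hvS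
  obtain ⟨a, b, hab⟩ := hS
  exact hab (Connected.of_isUniversal (isUniversal_induce hv hvS) a b)

/-- An embedding of `H` into `G` restricts to an isomorphism onto the subgraph of `G` induced by
any set of vertices in its range. This identifies what a cut leaves of `G` with what its preimage
leaves of `H`. -/
noncomputable def inducePreimageIso (f : H ↪g G) (hS : S ⊆ Set.range f) :
    H.induce (f ⁻¹' S) ≃g G.induce S where
  toEquiv := .ofBijective (S.restrictPreimage f)
    ⟨S.restrictPreimage_injective f.injective, by
      rintro ⟨b, hb⟩
      obtain ⟨a, rfl⟩ := hS hb
      exact ⟨⟨a, hb⟩, rfl⟩⟩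
  map_rel_iff' := f.map_adj_iff

lemma isVertexCut_preimage_iff (f : H ↪g G) (hS : Sᶜ ⊆ Set.range f) :
    IsVertexCut H (f ⁻¹' S) ↔ IsVertexCut G S := by
  let e : H.induce (f ⁻¹' S)ᶜ ≃g G.induce Sᶜ := inducePreimageIso f hS
  constructor
  · rintro ⟨a, b, hab⟩
    exact ⟨e a, e b, e.reachable_iff.not.mpr hab⟩
  · rintro ⟨a, b, hab⟩
    exact ⟨e.symm a, e.symm b, e.symm.reachable_iff.not.mpr hab⟩

theorem isForestCut_iff_mem_and_isIndependentCut_preimage (f : H ↪g G)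
    (hf : (Set.range f)ᶜ = {v}) (hv : G.IsUniversal v) :
    IsForestCut G S ↔ v ∈ S ∧ IsIndependentCut H (f ⁻¹' S) := by
  have iff_of_mem (hvS : v ∈ S) : IsForestCut G S ↔ IsIndependentCut H (f ⁻¹' S) := by
    have compl_subset : Sᶜ ⊆ Set.range f := by
      rwa [Set.compl_subset_comm, hf, Set.singleton_subset_iff]
    rw [IsForestCut, IsIndependentCut, isVertexCut_preimage_iff f compl_subset,
      ← isIndepSet_iff_forall_not_adj, isIndepSet_preimage_iff,
      isAcyclic_induce_iff_isIndepSet_sdiff_singleton hv hvS, ← hf, Set.sdiff_compl]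
  constructor
  · intro hS
    have hvS : v ∈ S := hS.1.mem_of_isUniversal hv
    exact ⟨hvS, (iff_of_mem hvS).mp hS⟩
  · rintro ⟨hvS, hS⟩
    exact (iff_of_mem hvS).mpr hS

theorem forest_cut_iff_independent_cut_of_cone_general (f : H ↪g G)
    (hf : (Set.range f)ᶜ = {v}) (hv : G.IsUniversal v) :
    (∃ S : Set V, IsForestCut G S) ↔ ∃ S : Set W, IsIndependentCut H S := by
  simp only [isForestCut_iff_mem_and_isIndependentCut_preimage f hf hv]
  refine ⟨fun ⟨S, _, hS⟩ ↦ ⟨f ⁻¹' S, hS⟩, fun ⟨T, hT⟩ ↦ ⟨insert v (f '' T), by simp, ?_⟩⟩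
  have preimage_v : f ⁻¹' {v} = ∅ := by
    rw [← hf, Set.preimage_compl, Set.preimage_range, Set.compl_univ]
  rwa [Set.insert_eq, Set.preimage_union, preimage_v, Set.empty_union,
    Set.preimage_image_eq _ f.injective]

end

/-- If `G` arises from `H` by adding one new vertex adjacent to all vertices of `H`,
then `G` has a forest cut if and only if `H` has an independent cut. -/
theorem forest_cut_iff_independent_cut_of_cone
    {W : Type*} (H : SimpleGraph W) (G : SimpleGraph (Option W))
    (hGH : ∀ a b : W, G.Adj (some a) (some b) ↔ H.Adj a b)
    (hGu : ∀ a : W, G.Adj none (some a)) :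
    (∃ S : Set (Option W), IsForestCut G S) ↔ (∃ S : Set W, IsIndependentCut H S) := by
  let f : H ↪g G := ⟨.some, hGH _ _⟩
  exact forest_cut_iff_independent_cut_of_cone_general f (Set.compl_range_some W)
    (Option.rec (absurd rfl) fun a _ ↦ hGu a)
end

section
/- If G is a 4-connected graph of order n greater than 8 that has no forest cut, u is a vertex of G of degree 4, and the neighborhood N_G(u) of u contains a triangle (three pairwise adjacent vertices), then the sum of the degrees in G of the four neighbors of u is at least 19. -/
/-- A graph is `k`-connected if it has more than `k` vertices and deleting any set of
fewer than `k` vertices leaves a connected graph. -/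
def KConnected {V : Type*} [Fintype V] (k : ℕ) (G : SimpleGraph V) : Prop :=
  k < Fintype.card V ∧ ∀ S : Finset V, S.card < k → (G.induce (↑S : Set V)ᶜ).Connected

/-!
Exchanging a set `A` of neighbours of `u` for the set `O(A)` of its neighbours outside the closed
neighbourhood of `u` turns `N(u)` into a vertex cut of size `4 - |A| + |O(A)|`, unless that cut
together with `A` and `u` exhausts the graph. Hence `|A| ≤ |O(A)|` by 4-connectivity. If
`|O(A)| = |A| ≤ 3`, the cut has four vertices and contains a cycle, so whenever one of its
vertices has at most one neighbour in it, the other three form a triangle.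

If `d` is the neighbour of `u` outside the triangle and `t` is the number of its neighbours in
`N(u)`, the degree sum is `10 + 2 * t + ∑ x ∈ N(u), |O(x)|`. Were it smaller than 19, most of the
sets `O(x)` would be so small that the resulting triangles force either `N(u)` to be a clique or
`O(N(u)) = O(d)`; then `|O(d)| ≥ 4`, and the sum is large after all.
-/

section

open Finset

variable {V : Type*} {G : SimpleGraph V}

theorem isVertexCut_of_neighbors_subset {S T : Set V} {v w : V} (hv : v ∈ T) (hvS : v ∉ S)
    (hw : w ∉ T) (hwS : w ∉ S) (hT : ∀ x ∈ T, ∀ y, G.Adj x y → y ∈ T ∨ y ∈ S) :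
    IsVertexCut G S := by
  refine ⟨⟨v, hvS⟩, ⟨w, hwS⟩, ?_⟩
  rintro ⟨p⟩
  obtain ⟨e, -, hfst, hsnd⟩ := p.exists_boundary_dart (Subtype.val ⁻¹' T) hv hw
  exact (hT _ hfst _ e.adj).elim hsnd e.snd.2

theorem KConnected.le_card_of_isVertexCut [Fintype V] {k : ℕ} {S : Finset V}
    (hG : KConnected k G) (hS : IsVertexCut G S) : k ≤ #S := by
  obtain ⟨v, w, hvw⟩ := hS
  by_contra! hlt
  exact hvw ((hG.2 S hlt).preconnected v w)

theorem KConnected.le_degree [Fintype V] [DecidableRel G.Adj] {k : ℕ} (hG : KConnected k G)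
    (v : V) : k ≤ G.degree v := by
  by_contra! hlt
  obtain ⟨w, -, hw⟩ := exists_mem_notMem_of_card_lt_card (t := univ)
    (s := cons v (G.neighborFinset v) (G.notMem_neighborFinset_self v)) (by
      rw [card_cons, G.card_neighborFinset_eq_degree, card_univ]
      exact (Nat.succ_le_of_lt hlt).trans_lt hG.1)
  simp only [mem_cons, not_or] at hw
  have hcut : IsVertexCut G (G.neighborFinset v) :=
    isVertexCut_of_neighbors_subset (T := {v}) rfl (by simp) hw.1 hw.2 (by simp +contextual)
  exact (hG.le_card_of_isVertexCut hcut).not_gt (by rwa [G.card_neighborFinset_eq_degree])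

theorem exists_two_le_card_filter_adj_of_not_isAcyclic [DecidableRel G.Adj]
    {S : Finset V} (hS : ¬ (G.induce (S : Set V)).IsAcyclic) :
    ∃ C ⊆ S, C.Nonempty ∧ ∀ x ∈ C, 2 ≤ #{y ∈ C | G.Adj x y} := by
  classical
  simp only [SimpleGraph.IsAcyclic, not_forall, not_not] at hS
  obtain ⟨x, p, hp⟩ := hS
  let f := SimpleGraph.Embedding.induce (G := G) (S : Set V)
  have hcycle : (p.map f.toHom).IsCycle := hp.map f.injective
  refine ⟨(p.map f.toHom).support.toFinset, ?_,
    ⟨f x, List.mem_toFinset.2 (p.map f.toHom).start_mem_support⟩, fun y hy => ?_⟩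
  · intro y hy
    simp only [SimpleGraph.Walk.support_map, List.mem_toFinset, List.mem_map] at hy
    obtain ⟨z, -, rfl⟩ := hy
    exact z.2
  · rw [← hcycle.ncard_neighborSet_toSubgraph_eq_two (List.mem_toFinset.1 hy),
      ← Set.ncard_coe_finset]
    refine Set.ncard_le_ncard (fun z hz => ?_) (Finset.finite_toSet _)
    have hyz : (p.map f.toHom).toSubgraph.Adj y z := hz
    exact mem_coe.2 (mem_filter.2 ⟨List.mem_toFinset.2
      ((SimpleGraph.Walk.mem_verts_toSubgraph _).1 hyz.snd_mem), hyz.adj_sub⟩)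

section FourElements

variable [DecidableEq V] {a b c d : V} {N : Finset V}

theorem exists_eq_insert_insert_pair (hN : #N = 4) (ha : a ∈ N) (hd : d ∈ N)
    (had : a ≠ d) : ∃ b c, N = {a, b, c, d} ∧ [a, b, c, d].Nodup := by
  obtain ⟨b, c, hbc, heq⟩ : ∃ b c, b ≠ c ∧ (N.erase a).erase d = {b, c} := by
    rw [← card_eq_two, card_erase_of_mem (mem_erase.2 ⟨had.symm, hd⟩), card_erase_of_mem ha, hN]
  have hb : b ∈ (N.erase a).erase d := by simp [heq]
  have hc : c ∈ (N.erase a).erase d := by simp [heq]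
  simp only [mem_erase] at hb hc
  refine ⟨b, c, ?_, ?_⟩
  · rw [← insert_erase ha, ← insert_erase (mem_erase.2 ⟨had.symm, hd⟩), heq]
    grind
  · simp only [List.nodup_cons, List.mem_cons, List.not_mem_nil, List.nodup_nil]
    grind

theorem sum_eq_of_eq_insert_insert_pair (hN : N = {a, b, c, d})
    (hne : [a, b, c, d].Nodup) (f : V → ℕ) : ∑ x ∈ N, f x = f a + f b + f c + f d := by
  have hlist : N = [a, b, c, d].toFinset := by simp [hN]
  rw [hlist, List.sum_toFinset f hne]
  simp [add_assoc]

end FourElements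

section Adjacency

variable [DecidableEq V] [DecidableRel G.Adj]

theorem isNClique_three_erase_of_not_isAcyclic {S : Finset V} {s : V}
    (hS : ¬ (G.induce (S : Set V)).IsAcyclic) (hcard : #S ≤ 4) (hs : s ∈ S)
    (hdeg : #{y ∈ S | G.Adj s y} ≤ 1) : G.IsNClique 3 (S.erase s) := by
  obtain ⟨C, hCS, ⟨x, hx⟩, hC⟩ := exists_two_le_card_filter_adj_of_not_isAcyclic hS
  have hsC : s ∉ C := fun h =>
    absurd ((hC s h).trans ((card_le_card (filter_subset_filter _ hCS)).trans hdeg)) (by simp)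
  have hadj (y : V) : {z ∈ C | G.Adj y z} ⊆ C.erase y := fun z hz =>
    mem_erase.2 ⟨(mem_filter.1 hz).2.ne', (mem_filter.1 hz).1⟩
  have hsub : C ⊆ S.erase s := subset_erase.2 ⟨hCS, hsC⟩
  have hSs : #(S.erase s) ≤ 3 := by rw [card_erase_of_mem hs]; omega
  have hC3 : 3 ≤ #C := by
    have := (hC x hx).trans (card_le_card (hadj x))
    rw [card_erase_of_mem hx] at this
    omega
  obtain rfl : C = S.erase s := eq_of_subset_of_card_le hsub (hSs.trans hC3)
  refine ⟨fun y hy z hz hyz => ?_, hSs.antisymm hC3⟩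
  have hall : {z ∈ S.erase s | G.Adj y z} = (S.erase s).erase y :=
    eq_of_subset_of_card_le (hadj y) (by
      rw [card_erase_of_mem hy]
      exact (Nat.sub_le_of_le_add hSs).trans (hC y hy))
  exact (mem_filter.1 (hall.symm ▸ mem_erase.2 ⟨hyz.symm, hz⟩)).2

theorem sum_card_filter_adj_insert_of_isNClique {T : Finset V} {d : V} {n : ℕ}
    (hT : G.IsNClique n T) (hd : d ∉ T) :
    ∑ x ∈ insert d T, #{y ∈ insert d T | G.Adj x y} =
      n * (n - 1) + 2 * #{y ∈ insert d T | G.Adj d y} := by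
  have hself : #{y ∈ insert d T | G.Adj d y} = #{y ∈ T | G.Adj d y} := by
    rw [filter_insert, if_neg G.irrefl]
  have hother (x : V) (hx : x ∈ T) :
      #{y ∈ insert d T | G.Adj x y} = (n - 1) + if G.Adj d x then 1 else 0 := by
    have hTx : #{y ∈ T | G.Adj x y} = n - 1 := by
      rw [← hT.card_eq, ← card_erase_of_mem hx]
      congr 1
      ext y
      exact ⟨fun h => mem_erase.2 ⟨(mem_filter.1 h).2.ne', (mem_filter.1 h).1⟩,
        fun h => mem_filter.2 ⟨mem_of_mem_erase h,
          hT.isClique hx (mem_of_mem_erase h) (ne_of_mem_erase h).symm⟩⟩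
    rw [card_filter, sum_insert hd, ← card_filter, hTx, add_comm]
    simp only [G.adj_comm]
  rw [sum_insert hd, sum_congr rfl hother, sum_add_distrib, sum_const, hT.card_eq,
    ← card_filter, smul_eq_mul, ← hself]
  ring

end Adjacency

variable [Fintype V] [DecidableEq V] [DecidableRel G.Adj] {u : V}

variable (G) in
/-- The neighbours of `x` outside the closed neighbourhood of `u`; for `x` adjacent to `u` these are
the neighbours of `x` at distance two from `u`. -/
def outerNeighborFinset (u x : V) : Finset V :=
  G.neighborFinset x \ insert u (G.neighborFinset u)

variable (G) in
/-- The neighbourhood of `u` with `A` exchanged for the outer neighbours of `A`. For `A` contained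
in `N(u)` it is the set of vertices outside `{u} ∪ A` with a neighbour in `{u} ∪ A`. -/
def exchangeCut (u : V) (A : Finset V) : Finset V :=
  (G.neighborFinset u \ A) ∪ A.biUnion (outerNeighborFinset G u)

theorem mem_outerNeighborFinset {x y : V} :
    y ∈ outerNeighborFinset G u x ↔ G.Adj x y ∧ y ≠ u ∧ ¬ G.Adj u y := by
  simp [outerNeighborFinset]

theorem disjoint_neighborFinset_biUnion_outerNeighborFinset (A : Finset V) :
    Disjoint (G.neighborFinset u) (A.biUnion (outerNeighborFinset G u)) := by
  simp only [disjoint_left, SimpleGraph.mem_neighborFinset, mem_biUnion, mem_outerNeighborFinset,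
    not_exists, not_and]
  exact fun y hy _ _ _ _ => not_not_intro hy

theorem card_exchangeCut_add_card {A : Finset V} (hA : A ⊆ G.neighborFinset u) :
    #(exchangeCut G u A) + #A = G.degree u + #(A.biUnion (outerNeighborFinset G u)) := by
  rw [exchangeCut, card_union_of_disjoint
    ((disjoint_neighborFinset_biUnion_outerNeighborFinset A).mono_left sdiff_subset),
    add_right_comm, card_sdiff_add_card_eq_card hA, SimpleGraph.card_neighborFinset_eq_degree]

theorem isVertexCut_exchangeCut {A : Finset V} (hA : A ⊆ G.neighborFinset u)
    (hcard : G.degree u + 1 + #(A.biUnion (outerNeighborFinset G u)) < Fintype.card V) :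
    IsVertexCut G (exchangeCut G u A) := by
  obtain ⟨w, hw⟩ :
      ∃ w, w ∉ insert u (G.neighborFinset u) ∪ A.biUnion (outerNeighborFinset G u) := by
    refine (exists_mem_notMem_of_card_lt_card (t := univ) ?_).imp fun w hw => hw.2
    refine (card_union_le _ _).trans_lt ((Nat.add_le_add_right (card_insert_le _ _) _).trans_lt ?_)
    simpa using hcard
  simp only [mem_union, mem_insert, not_or] at hw
  refine isVertexCut_of_neighbors_subset (T := ↑(insert u A)) (v := u) (w := w) (by simp)
    ?_ ?_ ?_ ?_
  · simp [exchangeCut, mem_outerNeighborFinset]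
  · simpa using ⟨hw.1.1, fun h => hw.1.2 (hA h)⟩
  · simpa [exchangeCut] using ⟨fun h => absurd h (by simpa using hw.1.2), by simpa using hw.2⟩
  · intro x hx y hxy
    simp only [coe_insert, Set.mem_insert_iff, mem_coe, exchangeCut, mem_union, mem_sdiff,
      SimpleGraph.mem_neighborFinset, mem_biUnion, mem_outerNeighborFinset] at hx ⊢
    rcases hx with rfl | hx
    · tauto
    · by_cases huy : G.Adj u y
      · tauto
      · by_cases hyu : y = u
        · exact Or.inl (Or.inl hyu)
        · exact Or.inr (Or.inr ⟨x, hx, hxy, hyu, huy⟩)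

/-- Hall's condition for matching `N(u)` into the vertices at distance two from `u`. -/
theorem KConnected.card_le_card_biUnion_outerNeighborFinset {k : ℕ} (hG : KConnected k G)
    (hu : G.degree u = k) (hn : 2 * k < Fintype.card V) {A : Finset V}
    (hA : A ⊆ G.neighborFinset u) :
    #A ≤ #(A.biUnion (outerNeighborFinset G u)) := by
  by_contra! hlt
  have hAu : #A ≤ G.degree u := G.card_neighborFinset_eq_degree u ▸ card_le_card hA
  have := hG.le_card_of_isVertexCut (isVertexCut_exchangeCut hA (by omega))
  have := card_exchangeCut_add_card hA
  omega

theorem degree_eq_of_mem_neighborFinset {x : V} (hx : x ∈ G.neighborFinset u) :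
    G.degree x = 1 + #{y ∈ G.neighborFinset u | G.Adj x y} + #(outerNeighborFinset G u x) := by
  have hsplit : G.neighborFinset x ∩ insert u (G.neighborFinset u) =
      insert u {y ∈ G.neighborFinset u | G.Adj x y} := by
    have hxu : G.Adj x u := ((G.mem_neighborFinset u x).1 hx).symm
    ext y
    simp only [mem_inter, SimpleGraph.mem_neighborFinset, mem_insert, mem_filter]
    grind
  rw [← G.card_neighborFinset_eq_degree,
    ← card_inter_add_card_sdiff _ (insert u (G.neighborFinset u)), hsplit,
    card_insert_of_notMem (by simp), add_comm 1, outerNeighborFinset]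

section DegreeFour

variable {a b c d x y s : V} {A : Finset V}

section

variable (hG : KConnected 4 G) (hn : 8 < Fintype.card V) (hu : G.degree u = 4)
include hG hn hu

theorem two_le_card_union_outerNeighborFinset (hx : x ∈ G.neighborFinset u)
    (hy : y ∈ G.neighborFinset u) (hxy : x ≠ y) :
    2 ≤ #(outerNeighborFinset G u x ∪ outerNeighborFinset G u y) := by
  simpa [card_pair hxy] using hG.card_le_card_biUnion_outerNeighborFinset hu hn
    (insert_subset hx (singleton_subset_iff.2 hy))

theorem one_le_card_outerNeighborFinset (hx : x ∈ G.neighborFinset u) :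
    1 ≤ #(outerNeighborFinset G u x) := by
  simpa using hG.card_le_card_biUnion_outerNeighborFinset hu hn (singleton_subset_iff.2 hx)

theorem four_le_card_outerNeighborFinset
    (hd : ∀ x ∈ G.neighborFinset u, outerNeighborFinset G u x ⊆ outerNeighborFinset G u d) :
    4 ≤ #(outerNeighborFinset G u d) := by
  rw [← hu, ← G.card_neighborFinset_eq_degree]
  exact (hG.card_le_card_biUnion_outerNeighborFinset hu hn subset_rfl).trans
    (card_le_card (biUnion_subset.2 hd))

end

variable (hG : KConnected 4 G) (hn : 8 < Fintype.card V)
  (hnf : ¬ ∃ S : Set V, IsForestCut G S) (hu : G.degree u = 4)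

include hn hnf hu in
theorem isNClique_exchangeCut_erase (hA : A ⊆ G.neighborFinset u) (hA3 : #A ≤ 3)
    (hO : #(A.biUnion (outerNeighborFinset G u)) ≤ #A) (hs : s ∈ exchangeCut G u A)
    (hdeg : #{y ∈ exchangeCut G u A | G.Adj s y} ≤ 1) :
    G.IsNClique 3 ((exchangeCut G u A).erase s) := by
  have hcut := isVertexCut_exchangeCut hA (by omega)
  have := card_exchangeCut_add_card hA
  exact isNClique_three_erase_of_not_isAcyclic (fun h => hnf ⟨_, hcut, h⟩) (by omega) hs hdeg

include hn hnf hu in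
theorem biUnion_outerNeighborFinset_subset (hA : A ⊆ G.neighborFinset u)
    (hO : #(A.biUnion (outerNeighborFinset G u)) ≤ #A)
    (hs : s ∈ G.neighborFinset u \ A) (hy : y ∈ G.neighborFinset u \ A) (hys : y ≠ s)
    (hdeg : #{z ∈ G.neighborFinset u \ A | G.Adj s z} +
      #(A.biUnion (outerNeighborFinset G u) ∩ outerNeighborFinset G u s) ≤ 1) :
    A.biUnion (outerNeighborFinset G u) ⊆ outerNeighborFinset G u y := by
  have hA3 : #A ≤ 3 := by
    have := card_lt_card (hA.ssubset_of_mem_notMem (mem_sdiff.1 hs).1 (mem_sdiff.1 hs).2)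
    rw [G.card_neighborFinset_eq_degree] at this
    omega
  have houter {z : V} (hz : z ∈ A.biUnion (outerNeighborFinset G u)) {v : V} (hvz : G.Adj v z) :
      z ∈ outerNeighborFinset G u v := by
    obtain ⟨w, -, hw⟩ := mem_biUnion.1 hz
    exact mem_outerNeighborFinset.2 ⟨hvz, (mem_outerNeighborFinset.1 hw).2⟩
  have hfilter : {z ∈ exchangeCut G u A | G.Adj s z} ⊆ {z ∈ G.neighborFinset u \ A | G.Adj s z} ∪
      (A.biUnion (outerNeighborFinset G u) ∩ outerNeighborFinset G u s) := by
    rw [exchangeCut, filter_union]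
    exact union_subset_union_right fun z hz =>
      mem_inter.2 ⟨(mem_filter.1 hz).1, houter (mem_filter.1 hz).1 (mem_filter.1 hz).2⟩
  have hclique := isNClique_exchangeCut_erase hn hnf hu hA hA3 hO (mem_union_left _ hs)
    ((card_le_card hfilter).trans ((card_union_le _ _).trans hdeg))
  intro z hz
  have hdisj := disjoint_left.1
    (disjoint_neighborFinset_biUnion_outerNeighborFinset (G := G) (u := u) A)
  have hne {v : V} (hv : v ∈ G.neighborFinset u \ A) : v ≠ z :=
    fun h => hdisj (mem_sdiff.1 hv).1 (h ▸ hz)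
  exact houter hz (hclique.isClique (mem_erase.2 ⟨hys, mem_union_left _ hy⟩)
    (mem_erase.2 ⟨(hne hs).symm, mem_union_right _ hz⟩) (hne hy))

include hG hn hnf hu in
theorem isClique_neighborFinset (hO : ∀ x ∈ G.neighborFinset u, #(outerNeighborFinset G u x) ≤ 1) :
    G.IsClique (G.neighborFinset u) := by
  intro x hx y hy hxy
  rw [mem_coe] at hx hy
  obtain ⟨a, ha, haxy⟩ : ∃ a ∈ G.neighborFinset u, a ∉ ({x, y} : Finset V) :=
    exists_mem_notMem_of_card_lt_card (by
      rw [G.card_neighborFinset_eq_degree, hu]; exact card_le_two.trans_lt (by simp))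
  obtain ⟨a', ha'⟩ := card_eq_one.1
    ((hO a ha).antisymm (one_le_card_outerNeighborFinset hG hn hu ha))
  have ha'u := mem_outerNeighborFinset.1 (ha' ▸ mem_singleton_self a')
  have hisolated : {z ∈ exchangeCut G u {a} | G.Adj a' z} = ∅ := by
    refine filter_eq_empty_iff.2 fun z hz haz => ?_
    simp only [exchangeCut, singleton_biUnion, ha', mem_union, mem_sdiff, mem_singleton] at hz
    rcases hz with ⟨hzu, hza⟩ | rfl
    · have hzO : outerNeighborFinset G u a ⊆ outerNeighborFinset G u z := by
        rw [ha', singleton_subset_iff]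
        exact mem_outerNeighborFinset.2 ⟨haz.symm, ha'u.2⟩
      have := two_le_card_union_outerNeighborFinset hG hn hu ha hzu (Ne.symm hza)
      rw [union_eq_right.2 hzO] at this
      exact absurd (this.trans (hO z hzu)) (by simp)
    · exact haz.ne rfl
  have hclique := isNClique_exchangeCut_erase hn hnf hu (singleton_subset_iff.2 ha) (by simp)
    (by simp [ha']) (s := a') (by simp [exchangeCut, ha']) (by simp [hisolated])
  have hmem {z : V} (hz : z ∈ G.neighborFinset u) (hza : z ≠ a) :
      z ∈ (exchangeCut G u {a}).erase a' :=
    mem_erase.2 ⟨fun h => ha'u.2.2 ((G.mem_neighborFinset u a').1 (h ▸ hz)),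
      mem_union_left _ (by simpa [hza] using hz)⟩
  exact hclique.isClique (hmem hx (by grind)) (hmem hy (by grind)) hxy

include hn hnf hu in
theorem outerNeighborFinset_subset_of_card_le_one (hd : d ∈ G.neighborFinset u)
    (hx : x ∈ G.neighborFinset u) (hdx : d ≠ x) (hdN : ∀ z ∈ G.neighborFinset u, G.Adj d z → z = x)
    (hO : #(outerNeighborFinset G u x) ≤ 1)
    (hy : y ∈ G.neighborFinset u) (hyx : y ≠ x) (hyd : y ≠ d) :
    outerNeighborFinset G u x ⊆ outerNeighborFinset G u y := by
  have hfilter : {z ∈ G.neighborFinset u \ {x} | G.Adj d z} = ∅ :=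
    filter_eq_empty_iff.2 fun z hz hdz => by
      have := hdN z (mem_sdiff.1 hz).1 hdz
      simp [this] at hz
  have := biUnion_outerNeighborFinset_subset hn hnf hu (singleton_subset_iff.2 hx)
    (by simpa using hO) (s := d) (y := y) (by simpa [hdx] using hd) (by simpa [hyx] using hy) hyd
    (by
      rw [hfilter, card_empty, zero_add, singleton_biUnion]
      exact (card_le_card inter_subset_left).trans hO)
  simpa using this

include hG hn hnf hu in
theorem two_le_card_outerNeighborFinset_of_card_le_one (hd : d ∈ G.neighborFinset u)
    (hx : x ∈ G.neighborFinset u) (hdx : d ≠ x) (hdN : ∀ z ∈ G.neighborFinset u, G.Adj d z → z = x)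
    (hO : #(outerNeighborFinset G u x) ≤ 1)
    (hy : y ∈ G.neighborFinset u) (hyx : y ≠ x) (hyd : y ≠ d) :
    2 ≤ #(outerNeighborFinset G u y) := by
  have hsub := outerNeighborFinset_subset_of_card_le_one hn hnf hu hd hx hdx hdN hO hy hyx hyd
  exact union_eq_right.2 hsub ▸ two_le_card_union_outerNeighborFinset hG hn hu hx hy hyx.symm

include hG hn hnf hu in
theorem outerNeighborFinset_subset_of_two_card_le_one (hN : G.neighborFinset u = {a, b, c, d})
    (hne : [a, b, c, d].Nodup) (hcd : ¬ G.Adj c d) (hb : #(outerNeighborFinset G u b) ≤ 1)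
    (hc : #(outerNeighborFinset G u c) ≤ 1) :
    outerNeighborFinset G u b ⊆ outerNeighborFinset G u a ∩ outerNeighborFinset G u d := by
  simp only [List.nodup_cons, List.mem_cons, List.not_mem_nil, or_false, not_or] at hne
  have hdeg : #{z ∈ G.neighborFinset u \ {b} | G.Adj c z} ≤ 1 := by
    refine (card_le_card (t := {a}) fun z hz => ?_).trans_eq (card_singleton a)
    have := G.irrefl (v := c)
    grind
  have hinter : #(outerNeighborFinset G u b ∩ outerNeighborFinset G u c) = 0 := by
    have := two_le_card_union_outerNeighborFinset hG hn hu (x := b) (y := c)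
      (by simp [hN]) (by simp [hN]) hne.2.1.1
    have := card_union_add_card_inter (outerNeighborFinset G u b) (outerNeighborFinset G u c)
    omega
  have hsub (y : V) (hy : y ∈ G.neighborFinset u \ {b}) (hyc : y ≠ c) :
      outerNeighborFinset G u b ⊆ outerNeighborFinset G u y := by
    simpa only [singleton_biUnion] using biUnion_outerNeighborFinset_subset hn hnf hu (A := {b})
      (by simp [hN]) (by simpa using hb) (s := c) (by grind) hy hyc
      (by rw [singleton_biUnion, hinter]; exact hdeg)
  exact subset_inter (hsub a (by grind) (by grind)) (hsub d (by grind) (by grind))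

include hG hn hnf hu in
theorem four_le_card_outerNeighborFinset_of_card_le_two_one_one
    (hN : G.neighborFinset u = {a, b, c, d}) (hne : [a, b, c, d].Nodup)
    (hdb : ¬ G.Adj d b) (hdc : ¬ G.Adj d c) (ha : #(outerNeighborFinset G u a) ≤ 2)
    (hb : #(outerNeighborFinset G u b) ≤ 1) (hc : #(outerNeighborFinset G u c) ≤ 1) :
    4 ≤ #(outerNeighborFinset G u d) := by
  have hb' := subset_inter_iff.1 (outerNeighborFinset_subset_of_two_card_le_one hG hn hnf hu
    hN hne (mt G.adj_symm hdc) hb hc)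
  have hc' := subset_inter_iff.1 (outerNeighborFinset_subset_of_two_card_le_one hG hn hnf hu
    (a := a) (b := c) (c := b) (d := d) (by grind) (by grind) (mt G.adj_symm hdb) hc hb)
  have ha' : outerNeighborFinset G u b ∪ outerNeighborFinset G u c = outerNeighborFinset G u a :=
    eq_of_subset_of_card_le (union_subset hb'.1 hc'.1)
      (ha.trans (two_le_card_union_outerNeighborFinset hG hn hu (by simp [hN]) (by simp [hN])
        (by grind)))
  refine four_le_card_outerNeighborFinset hG hn hu fun x hx => ?_
  simp only [hN, mem_insert, mem_singleton] at hx
  rcases hx with rfl | rfl | rfl | rfl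
  · exact ha' ▸ union_subset hb'.2 hc'.2
  · exact hb'.2
  · exact hc'.2
  · exact subset_rfl

include hG hn hnf hu in
theorem outerNeighborFinset_subset_of_card_le_one_two_two
    (hN : G.neighborFinset u = {a, b, c, d}) (hne : [a, b, c, d].Nodup) (hcd : ¬ G.Adj c d)
    (hab : outerNeighborFinset G u a ⊆ outerNeighborFinset G u b)
    (hb : #(outerNeighborFinset G u b) ≤ 2) (hc : #(outerNeighborFinset G u c) ≤ 2) :
    outerNeighborFinset G u b ⊆ outerNeighborFinset G u d := by
  simp only [List.nodup_cons, List.mem_cons, List.not_mem_nil, or_false, not_or] at hne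
  have hpair : ({a, b} : Finset V).biUnion (outerNeighborFinset G u) =
      outerNeighborFinset G u b := by
    rw [biUnion_insert, singleton_biUnion, union_eq_right.2 hab]
  have hfilter : {z ∈ G.neighborFinset u \ {a, b} | G.Adj c z} = ∅ := by
    have := G.irrefl (v := c)
    refine filter_eq_empty_iff.2 fun z hz hcz => ?_
    grind
  have hinter : #(outerNeighborFinset G u b ∩ outerNeighborFinset G u c) ≤ 1 := by
    have hthree : #({a, b, c} : Finset V) = 3 :=
      card_eq_three.2 ⟨a, b, c, hne.1.1, hne.1.2.1, hne.2.1.1, rfl⟩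
    have hhall := hG.card_le_card_biUnion_outerNeighborFinset hu hn (A := {a, b, c}) (by grind)
    rw [hthree, biUnion_insert, biUnion_insert, singleton_biUnion, ← union_assoc,
      union_eq_right.2 hab] at hhall
    have := card_union_add_card_inter (outerNeighborFinset G u b) (outerNeighborFinset G u c)
    omega
  simpa only [hpair] using biUnion_outerNeighborFinset_subset hn hnf hu (A := {a, b})
    (by grind) (by rwa [hpair, card_pair hne.1.1]) (s := c) (y := d) (by grind) (by grind)
    (by grind) (by rwa [hpair, hfilter, card_empty, zero_add])

include hG hn hnf hu in
theorem four_le_card_outerNeighborFinset_of_card_le_one_two_two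
    (hN : G.neighborFinset u = {a, b, c, d}) (hne : [a, b, c, d].Nodup)
    (hdN : ∀ z ∈ G.neighborFinset u, ¬ G.Adj d z) (ha : #(outerNeighborFinset G u a) ≤ 1)
    (hb : #(outerNeighborFinset G u b) ≤ 2) (hc : #(outerNeighborFinset G u c) ≤ 2) :
    4 ≤ #(outerNeighborFinset G u d) := by
  have hsub {y : V} (hy : y ∈ G.neighborFinset u) (hya : y ≠ a) (hyd : y ≠ d) :
      outerNeighborFinset G u a ⊆ outerNeighborFinset G u y :=
    outerNeighborFinset_subset_of_card_le_one hn hnf hu (by simp [hN]) (by simp [hN]) (by grind)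
      (fun z hz hdz => absurd hdz (hdN z hz)) ha hy hya hyd
  have hb' := outerNeighborFinset_subset_of_card_le_one_two_two hG hn hnf hu hN hne
    (mt G.adj_symm (hdN c (by simp [hN]))) (hsub (by simp [hN]) (by grind) (by grind)) hb hc
  have hc' := outerNeighborFinset_subset_of_card_le_one_two_two hG hn hnf hu
    (a := a) (b := c) (c := b) (d := d) (by grind) (by grind)
    (mt G.adj_symm (hdN b (by simp [hN]))) (hsub (by simp [hN]) (by grind) (by grind)) hc hb
  refine four_le_card_outerNeighborFinset hG hn hu fun x hx => ?_
  by_cases hxd : x = d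
  · rw [hxd]
  · by_cases hxa : x = a
    · exact hxa ▸ (hsub (by simp [hN]) (by grind) (by grind)).trans hb'
    · grind

include hG hn hnf hu in
theorem seven_le_sum_card_outerNeighborFinset (hd : d ∈ G.neighborFinset u)
    (ha : a ∈ G.neighborFinset u) (had : a ≠ d) (hdN : ∀ z ∈ G.neighborFinset u, G.Adj d z → z = a)
    (hd2 : 2 ≤ #(outerNeighborFinset G u d)) :
    7 ≤ ∑ x ∈ G.neighborFinset u, #(outerNeighborFinset G u x) := by
  obtain ⟨b, c, hN, hne⟩ :=
    exists_eq_insert_insert_pair ((G.card_neighborFinset_eq_degree u).trans hu) ha hd had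
  have hbN : b ∈ G.neighborFinset u := by simp [hN]
  have hcN : c ∈ G.neighborFinset u := by simp [hN]
  have ha1 := one_le_card_outerNeighborFinset hG hn hu ha
  have hb1 := one_le_card_outerNeighborFinset hG hn hu hbN
  have hc1 := one_le_card_outerNeighborFinset hG hn hu hcN
  rw [sum_eq_of_eq_insert_insert_pair hN hne]
  simp only [List.nodup_cons, List.mem_cons, List.not_mem_nil, or_false, not_or] at hne
  by_cases ha2 : #(outerNeighborFinset G u a) ≤ 1
  · have htwo {y : V} := two_le_card_outerNeighborFinset_of_card_le_one hG hn hnf hu (y := y)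
      hd ha had.symm hdN ha2
    have := htwo hbN (by grind) (by grind)
    have := htwo hcN (by grind) (by grind)
    omega
  · by_contra! hlt
    have := four_le_card_outerNeighborFinset_of_card_le_two_one_one hG hn hnf hu hN (by grind)
      (by grind) (by grind) (by omega) (by omega) (by omega)
    omega

include hG hn hnf hu in
theorem nine_le_sum_card_outerNeighborFinset (hd : d ∈ G.neighborFinset u)
    (hdN : ∀ z ∈ G.neighborFinset u, ¬ G.Adj d z) (hd3 : 3 ≤ #(outerNeighborFinset G u d)) :
    9 ≤ ∑ x ∈ G.neighborFinset u, #(outerNeighborFinset G u x) := by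
  have hcard : #(G.neighborFinset u) = 4 := (G.card_neighborFinset_eq_degree u).trans hu
  by_cases hall : ∀ x ∈ (G.neighborFinset u).erase d, 2 ≤ #(outerNeighborFinset G u x)
  · have := card_nsmul_le_sum _ _ _ hall
    rw [card_erase_of_mem hd, hcard, smul_eq_mul] at this
    have := add_sum_erase _ (fun x => #(outerNeighborFinset G u x)) hd
    omega
  push Not at hall
  obtain ⟨a, ha, ha1⟩ := hall
  obtain ⟨had, haN⟩ := mem_erase.1 ha
  obtain ⟨b, c, hN, hne⟩ := exists_eq_insert_insert_pair hcard haN hd had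
  have hne' := hne
  simp only [List.nodup_cons, List.mem_cons, List.not_mem_nil, or_false, not_or] at hne'
  have htwo {y : V} := two_le_card_outerNeighborFinset_of_card_le_one hG hn hnf hu (y := y)
    hd haN had.symm (fun z hz hdz => absurd hdz (hdN z hz)) (Nat.le_of_lt_succ ha1)
  have hb2 := htwo (y := b) (by simp [hN]) (by grind) (by grind)
  have hc2 := htwo (y := c) (by simp [hN]) (by grind) (by grind)
  have ha1' := one_le_card_outerNeighborFinset hG hn hu haN
  rw [sum_eq_of_eq_insert_insert_pair hN hne]
  by_contra! hlt
  have := four_le_card_outerNeighborFinset_of_card_le_one_two_two hG hn hnf hu hN hne hdN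
    (by omega) (by omega) (by omega)
  omega

include hG hn hnf hu in
theorem four_lt_sum_card_outerNeighborFinset (hclique : ¬ G.IsClique (G.neighborFinset u)) :
    4 < ∑ x ∈ G.neighborFinset u, #(outerNeighborFinset G u x) := by
  obtain ⟨x, hx, hx1⟩ : ∃ x ∈ G.neighborFinset u, 1 < #(outerNeighborFinset G u x) := by
    by_contra! h
    exact hclique (isClique_neighborFinset hG hn hnf hu h)
  calc 4 = ∑ _ ∈ G.neighborFinset u, 1 := by
        rw [sum_const, G.card_neighborFinset_eq_degree, hu, smul_eq_mul]
    _ < _ := sum_lt_sum (fun _ => one_le_card_outerNeighborFinset hG hn hu) ⟨x, hx, hx1⟩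

include hG hn hnf hu in
theorem nine_le_two_mul_card_add_sum_card_outerNeighborFinset (hd : d ∈ G.neighborFinset u) :
    9 ≤ 2 * #{y ∈ G.neighborFinset u | G.Adj d y} +
      ∑ x ∈ G.neighborFinset u, #(outerNeighborFinset G u x) := by
  have hdeg := hG.le_degree d
  rw [degree_eq_of_mem_neighborFinset hd] at hdeg
  rcases Nat.lt_or_ge #{y ∈ G.neighborFinset u | G.Adj d y} 2 with hlt | hge
  · interval_cases ht : #{y ∈ G.neighborFinset u | G.Adj d y}
    · have := nine_le_sum_card_outerNeighborFinset hG hn hnf hu hd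
        (filter_eq_empty_iff.1 (card_eq_zero.1 ht)) (by omega)
      omega
    · obtain ⟨a, ha⟩ := card_eq_one.1 ht
      have haN := mem_filter.1 (ha ▸ mem_singleton_self a)
      have := seven_le_sum_card_outerNeighborFinset hG hn hnf hu hd haN.1 haN.2.ne'
        (fun z hz hdz => mem_singleton.1 (ha ▸ mem_filter.2 ⟨hz, hdz⟩)) (by omega)
      omega
  · by_cases hclique : G.IsClique (G.neighborFinset u)
    · have hthree : #((G.neighborFinset u).erase d) ≤ #{y ∈ G.neighborFinset u | G.Adj d y} :=
        card_le_card fun y hy => mem_filter.2 ⟨mem_of_mem_erase hy,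
          hclique hd (mem_of_mem_erase hy) (ne_of_mem_erase hy).symm⟩
      have hfour := card_nsmul_le_sum (G.neighborFinset u) (fun x => #(outerNeighborFinset G u x)) 1
        fun _ => one_le_card_outerNeighborFinset hG hn hu
      rw [card_erase_of_mem hd, G.card_neighborFinset_eq_degree, hu] at hthree
      rw [G.card_neighborFinset_eq_degree, hu, smul_eq_mul] at hfour
      omega
    · have := four_lt_sum_card_outerNeighborFinset hG hn hnf hu hclique
      omega

end DegreeFour

end

/-- In a `4`-connected graph of order greater than `8` with no forest cut, if `u` is a
vertex of degree `4` whose neighborhood contains a triangle, then the degrees of the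
neighbors of `u` sum to at least `19`. -/
theorem degree_sum_of_neighbors_with_triangle
    {V : Type*} [Fintype V] [DecidableEq V] (G : SimpleGraph V) [DecidableRel G.Adj]
    (hconn : KConnected 4 G) (hn : 8 < Fintype.card V)
    (hnf : ¬ ∃ S : Set V, IsForestCut G S)
    (u : V) (hu : G.degree u = 4)
    (htri : ∃ a ∈ G.neighborSet u, ∃ b ∈ G.neighborSet u, ∃ c ∈ G.neighborSet u,
      G.Adj a b ∧ G.Adj b c ∧ G.Adj a c) :
    19 ≤ ∑ v ∈ G.neighborFinset u, G.degree v := by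
  obtain ⟨a, ha, b, hb, c, hc, hab, hbc, hac⟩ := htri
  have hT : G.IsNClique 3 {a, b, c} := SimpleGraph.is3Clique_triple_iff.2 ⟨hab, hac, hbc⟩
  have hTu : {a, b, c} ⊆ G.neighborFinset u := by
    simpa [Finset.insert_subset_iff] using ⟨ha, hb, hc⟩
  have hcard := G.card_neighborFinset_eq_degree u
  obtain ⟨d, hd, hN⟩ := Finset.exists_eq_insert_iff.2 ⟨hTu, by rw [hT.card_eq, hcard, hu]⟩
  have hbound := nine_le_two_mul_card_add_sum_card_outerNeighborFinset hconn hn hnf hu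
    (hN ▸ Finset.mem_insert_self d _)
  have hinner := sum_card_filter_adj_insert_of_isNClique hT hd
  rw [hN] at hinner
  rw [Finset.sum_congr rfl fun x hx => degree_eq_of_mem_neighborFinset hx,
    Finset.sum_add_distrib, Finset.sum_add_distrib, hinner, Finset.sum_const, hcard, hu,
    smul_eq_mul]
  omega
end
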